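/- Let p be a real polynomial in n variables, homogeneous of degree d ≥ 1, hyperbolic in direction e ∈ ℝⁿ with p(e) > 0, suppose Λ₊ is regular, and let 0 < α < √d. Then for every e' ∈ Λ₊₊, the dual cone of K_{e'}(α) with respect to the standard inner product satisfies K_{e'}(α)* := {y ∈ ℝⁿ : ⟨y, x⟩ ≥ 0 for all x ∈ K_{e'}(α)} = { H(e')·s : s ∈ K_{e'}(√(d−α²)) }. -/

import Mathlib

open scoped BigOperators

/-- The univariate polynomial `t ↦ p(t • e - x)` associated to a multivariate polynomial `p`,
a direction `e` and a point `x`. -/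
noncomputable def hypCharPoly {n : ℕ} (p : MvPolynomial (Fin n) ℝ) (e x : Fin n → ℝ) :
    Polynomial ℝ :=
  MvPolynomial.aeval (fun i => Polynomial.C (e i) * Polynomial.X - Polynomial.C (x i)) p

/-- `p` is a homogeneous polynomial of degree `d`, hyperbolic in direction `e`:
`p(e) ≠ 0` and for every `x` the polynomial `t ↦ p(t • e - x)` has `d` real roots
counted with multiplicity. -/
def IsHyperbolicPoly {n : ℕ} (p : MvPolynomial (Fin n) ℝ) (e : Fin n → ℝ) (d : ℕ) : Prop :=
  p.IsHomogeneous d ∧ MvPolynomial.eval e p ≠ 0 ∧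
    ∀ x : Fin n → ℝ, Multiset.card (hypCharPoly p e x).roots = d

/-- The (closed) hyperbolicity cone `Λ₊`: all hyperbolic eigenvalues are nonnegative. -/
def hypConeClosed {n : ℕ} (p : MvPolynomial (Fin n) ℝ) (e : Fin n → ℝ) : Set (Fin n → ℝ) :=
  {x | ∀ r ∈ (hypCharPoly p e x).roots, (0:ℝ) ≤ r}

/-- The open hyperbolicity cone `Λ₊₊`: all hyperbolic eigenvalues are positive. -/
def hypConeOpen {n : ℕ} (p : MvPolynomial (Fin n) ℝ) (e : Fin n → ℝ) : Set (Fin n → ℝ) :=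
  {x | ∀ r ∈ (hypCharPoly p e x).roots, (0:ℝ) < r}

/-- The gradient of `f(x) = -ln p(x)`, namely `g(x)ᵢ = -(∂ᵢ p)(x) / p(x)`. -/
noncomputable def gradNegLog {n : ℕ} (p : MvPolynomial (Fin n) ℝ) (x : Fin n → ℝ) :
    Fin n → ℝ :=
  fun i => -(MvPolynomial.eval x (MvPolynomial.pderiv i p)) / MvPolynomial.eval x p

/-- The Hessian of `f(x) = -ln p(x)`, namely
`H(x)ᵢⱼ = (∂ᵢp)(x)(∂ⱼp)(x)/p(x)² - (∂ᵢ∂ⱼp)(x)/p(x)`. -/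
noncomputable def hessNegLog {n : ℕ} (p : MvPolynomial (Fin n) ℝ) (x : Fin n → ℝ) :
    Matrix (Fin n) (Fin n) ℝ :=
  Matrix.of fun i j =>
    MvPolynomial.eval x (MvPolynomial.pderiv i p) * MvPolynomial.eval x (MvPolynomial.pderiv j p)
        / (MvPolynomial.eval x p) ^ 2
      - MvPolynomial.eval x (MvPolynomial.pderiv i (MvPolynomial.pderiv j p))
        / MvPolynomial.eval x p

/-- The local inner product `⟨u, v⟩_{e'} = uᵀ H(e') v`. -/
noncomputable def localIP {n : ℕ} (p : MvPolynomial (Fin n) ℝ) (e' u v : Fin n → ℝ) : ℝ :=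
  ∑ i, ∑ j, u i * hessNegLog p e' i j * v j

/-- The local norm `‖v‖_{e'} = ⟨v, v⟩_{e'}^{1/2}`. -/
noncomputable def localNorm {n : ℕ} (p : MvPolynomial (Fin n) ℝ) (e' v : Fin n → ℝ) : ℝ :=
  Real.sqrt (localIP p e' v v)

/-- The closed quadratic cone `K_{e'}(α) = {x : ⟨e', x⟩_{e'} ≥ α ‖x‖_{e'}}`. -/
noncomputable def quadCone {n : ℕ} (p : MvPolynomial (Fin n) ℝ) (e' : Fin n → ℝ) (α : ℝ) :
    Set (Fin n → ℝ) :=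
  {x | α * localNorm p e' x ≤ localIP p e' e' x}

/-- The hyperbolicity cone is regular: it contains no nonzero linear subspace. -/
def IsRegularCone {n : ℕ} (p : MvPolynomial (Fin n) ℝ) (e : Fin n → ℝ) : Prop :=
  ∀ W : Submodule ℝ (Fin n → ℝ), (W : Set (Fin n → ℝ)) ⊆ hypConeClosed p e → W = ⊥

/-!
Write `⟨·,·⟩_a` for the Hessian form at `a ∈ Λ₊₊`; homogeneity gives `⟨a, a⟩_a = d`. For any
positive semidefinite form `B`, the functionals nonnegative on the circular cone
`{x | B a x ≥ α ‖x‖_B}` are the `B s` with `B a s ≥ β ‖s‖_B`, where `α² + β² = B a a`: such a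
functional vanishes on the kernel of `B`, hence is `B s` for some `s`, and the rest is
Cauchy–Schwarz for the parts orthogonal to `a`.

The form `⟨·,·⟩_a` is positive semidefinite by Laguerre's inequality `q q'' ≤ (q')²` for the
polynomials `q(t) = p(a + t v)`, which are real-rooted because `p` is hyperbolic in direction `a`
as well. This last fact is Gårding's theorem: for `w` in the tube `{i β e + x | β > 0}`, the
polynomial `t ↦ p(t a + w)` has no zeros in the closed upper half-plane. This holds at `w = i e`,
is an open condition on `w`, and is closed on the tube, hence holds on all of it; then `β → 0`.
-/

section LinePoly

open Polynomial

variable {σ R S : Type*} [CommSemiring R] [CommSemiring S]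

/-- The restriction `t ↦ p(t • u + w)` of a multivariate polynomial to a line. -/
noncomputable def linePoly (p : MvPolynomial σ R) (u w : σ → R) : R[X] :=
  MvPolynomial.aeval (fun i => C (u i) * X + C (w i)) p

lemma eval_linePoly (p : MvPolynomial σ R) (u w : σ → R) (t : R) :
    (linePoly p u w).eval t = MvPolynomial.eval (t • u + w) p := by
  have h := MvPolynomial.comp_aeval_apply (fun i => C (u i) * X + C (w i)) (aeval t) p
  simp only [coe_aeval_eq_eval, eval_add, eval_mul, eval_C, eval_X,
    MvPolynomial.aeval_eq_eval, mul_comm _ t] at h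
  exact h

lemma map_linePoly (f : R →+* S) (p : MvPolynomial σ R) (u w : σ → R) :
    (linePoly p u w).map f = linePoly (p.map f) (f ∘ u) (f ∘ w) := by
  induction p using MvPolynomial.induction_on with
  | C a => simp [linePoly]
  | add p q hp hq => simp_all [linePoly]
  | mul_X p i hp => simp_all [linePoly]

lemma natDegree_linePoly_le (p : MvPolynomial σ R) (u w : σ → R) :
    (linePoly p u w).natDegree ≤ p.totalDegree := by
  simpa only [linePoly, mul_one] using MvPolynomial.aeval_natDegree_le p le_rfl _
    fun i => natDegree_linear_le (a := u i) (b := w i)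

lemma prod_map_toMultiset (m : σ →₀ ℕ) (g : σ → R) :
    (m.toMultiset.map g).prod = ∏ i ∈ m.support, g i ^ m i := by
  rw [Finsupp.toMultiset_map, Finsupp.prod_toMultiset,
    Finsupp.prod_mapDomain_index (fun _ => pow_zero _) fun _ _ _ => pow_add _ _ _]
  rfl

lemma coeff_prod_linear_pow (m : σ →₀ ℕ) (u w : σ → R) :
    (∏ i ∈ m.support, (C (u i) * X + C (w i)) ^ m i).coeff (∑ i ∈ m.support, m i) =
      ∏ i ∈ m.support, u i ^ m i := by
  have hlin : ∀ q ∈ m.toMultiset.map fun i => C (u i) * X + C (w i), q.natDegree ≤ 1 := by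
    simp only [Multiset.mem_map]
    rintro _ ⟨i, -, rfl⟩
    exact natDegree_linear_le
  have h := coeff_multiset_prod_of_natDegree_le _ 1 hlin
  rw [Multiset.card_map, Finsupp.card_toMultiset, mul_one, Multiset.map_map,
    prod_map_toMultiset, prod_map_toMultiset] at h
  simpa [coeff_X, coeff_C, Finsupp.sum] using h

lemma coeff_linePoly {p : MvPolynomial σ R} {d : ℕ} (hp : p.IsHomogeneous d) (u w : σ → R) :
    (linePoly p u w).coeff d = MvPolynomial.eval u p := by
  rw [linePoly, MvPolynomial.aeval_def, MvPolynomial.eval₂_eq, MvPolynomial.eval_eq,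
    finsetSum_coeff]
  refine Finset.sum_congr rfl fun m hm => ?_
  rw [Polynomial.algebraMap_apply, Algebra.algebraMap_self_apply, coeff_C_mul,
    hp.degree_eq_sum_deg_support hm, coeff_prod_linear_pow]

lemma natDegree_linePoly {p : MvPolynomial σ R} {d : ℕ} (hp : p.IsHomogeneous d) {u : σ → R}
    (hu : MvPolynomial.eval u p ≠ 0) (w : σ → R) : (linePoly p u w).natDegree = d :=
  le_antisymm ((natDegree_linePoly_le p u w).trans hp.totalDegree_le)
    (le_natDegree_of_ne_zero (by rwa [coeff_linePoly hp]))

lemma eval_smul_of_isHomogeneous {p : MvPolynomial σ R} {d : ℕ} (hp : p.IsHomogeneous d)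
    (c : R) (z : σ → R) : MvPolynomial.eval (c • z) p = c ^ d * MvPolynomial.eval z p := by
  rw [MvPolynomial.eval_eq, MvPolynomial.eval_eq, Finset.mul_sum]
  refine Finset.sum_congr rfl fun m hm => ?_
  simp only [Pi.smul_apply, smul_eq_mul, mul_pow, Finset.prod_mul_distrib,
    Finset.prod_pow_eq_pow_sum]
  rw [← hp.degree_eq_sum_deg_support hm]
  ring

lemma derivative_linePoly [Fintype σ] (p : MvPolynomial σ R) (u w : σ → R) :
    derivative (linePoly p u w) = ∑ i, C (u i) * linePoly (p.pderiv i) u w := by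
  classical
  induction p using MvPolynomial.induction_on with
  | C a => simp [linePoly]
  | add p q hp hq => simp_all [linePoly, mul_add, Finset.sum_add_distrib]
  | mul_X p j hp =>
    have hterm (i : σ) : C (u i) * linePoly (MvPolynomial.pderiv i (p * MvPolynomial.X j)) u w =
        C (u i) * linePoly (p.pderiv i) u w * (C (u j) * X + C (w j)) +
          (if j = i then linePoly p u w * C (u i) else 0) := by
      rcases eq_or_ne j i with rfl | h <;>
        simp_all [linePoly, MvPolynomial.pderiv_X] <;> ring
    have hmul : linePoly (p * MvPolynomial.X j) u w =
        linePoly p u w * (C (u j) * X + C (w j)) := by simp [linePoly]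
    rw [Finset.sum_congr rfl fun i _ => hterm i, hmul, Finset.sum_add_distrib, ← Finset.sum_mul,
      ← hp, Finset.sum_ite_eq, derivative_mul]
    simp

end LinePoly

section ZeroFree

variable {σ : Type*} {d : ℕ} {P : MvPolynomial σ ℂ} {u : σ → ℂ}

lemma im_pow_card_le_norm_prod {t : ℂ} (ht : 0 ≤ t.im) (s : Multiset ℂ)
    (hs : ∀ r ∈ s, r.im ≤ 0) : t.im ^ s.card ≤ ‖(s.map (t - ·)).prod‖ := by
  induction s using Multiset.induction_on with
  | empty => simp
  | cons a s ih =>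
    obtain ⟨ha, hs⟩ := Multiset.forall_mem_cons.1 hs
    have hta : t.im ≤ ‖t - a‖ := calc
      t.im ≤ (t - a).im := by rw [Complex.sub_im]; linarith
      _ ≤ ‖t - a‖ := (le_abs_self _).trans (Complex.abs_im_le_norm _)
    rw [Multiset.card_cons, Multiset.map_cons, Multiset.prod_cons, norm_mul, pow_succ']
    exact mul_le_mul hta (ih hs) (by positivity) (norm_nonneg _)

lemma norm_leadingCoeff_mul_im_pow_le {q : Polynomial ℂ} (hq : ∀ z : ℂ, 0 < z.im → q.eval z ≠ 0)
    {t : ℂ} (ht : 0 ≤ t.im) : ‖q.leadingCoeff‖ * t.im ^ q.natDegree ≤ ‖q.eval t‖ := by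
  have hsplit := IsAlgClosed.splits q
  rw [hsplit.eval_eq_prod_roots, hsplit.natDegree_eq_card_roots, norm_mul]
  gcongr
  refine im_pow_card_le_norm_prod ht _ fun r hr => ?_
  contrapose! hq
  exact ⟨r, hq, Polynomial.isRoot_of_mem_roots hr⟩

/-- The set of base points `w` for which the complex line `t ↦ t • u + w` avoids the zeros of `P`
for all parameters `t ∈ F`. -/
def zeroFreeSet (P : MvPolynomial σ ℂ) (u : σ → ℂ) (F : Set ℂ) : Set (σ → ℂ) :=
  {w | ∀ t ∈ F, MvPolynomial.eval (t • u + w) P ≠ 0}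

lemma zeroFreeSet_anti {F G : Set ℂ} (h : F ⊆ G) : zeroFreeSet P u G ⊆ zeroFreeSet P u F :=
  fun _ hw t ht => hw t (h ht)

lemma continuous_eval_smul_add (P : MvPolynomial σ ℂ) (u : σ → ℂ) :
    Continuous fun x : (σ → ℂ) × ℂ => MvPolynomial.eval (x.2 • u + x.1) P :=
  P.continuous_eval.comp (by fun_prop)

/- If all zeros of `t ↦ P(t u + w)` lie in the closed lower half-plane, then its value at `t` is at
least `|P(u)| (Im t) ^ d`, a bound that survives limits in `w`. -/
lemma isClosed_zeroFreeSet_upperHalfPlane (hP : P.IsHomogeneous d)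
    (hu : MvPolynomial.eval u P ≠ 0) : IsClosed (zeroFreeSet P u {t | 0 < t.im}) := by
  have hbound : zeroFreeSet P u {t | 0 < t.im} = ⋂ t : ℂ, ⋂ _ : 0 < t.im,
      {w | ‖MvPolynomial.eval u P‖ * t.im ^ d ≤ ‖MvPolynomial.eval (t • u + w) P‖} := by
    ext w
    simp only [zeroFreeSet, Set.mem_iInter, Set.mem_ofPred_eq]
    refine ⟨fun hw t ht => ?_, fun hw t ht => ?_⟩
    · have := norm_leadingCoeff_mul_im_pow_le (q := linePoly P u w)
        (by simpa only [eval_linePoly] using hw) ht.le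
      rwa [Polynomial.leadingCoeff, natDegree_linePoly hP hu, coeff_linePoly hP,
        eval_linePoly] at this
    · exact norm_pos_iff.1 ((by positivity : 0 < ‖MvPolynomial.eval u P‖ * t.im ^ d).trans_le
        (hw t ht))
  rw [hbound]
  refine isClosed_iInter fun t => isClosed_iInter fun _ => isClosed_le continuous_const ?_
  exact ((continuous_eval_smul_add P u).comp (Continuous.prodMk_left t)).norm

lemma exists_mul_norm_le_of_eval_smul_add_eq_zero [Fintype σ] (hP : P.IsHomogeneous d)
    (hu : MvPolynomial.eval u P ≠ 0) :
    ∃ ε > 0, ∀ (t : ℂ) (w : σ → ℂ), MvPolynomial.eval (t • u + w) P = 0 → ε * ‖t‖ ≤ ‖w‖ := by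
  obtain ⟨ε, hε, hball⟩ := Metric.eventually_nhds_iff.1
    (P.continuous_eval.continuousAt.eventually_ne hu)
  refine ⟨ε, hε, fun t w h => ?_⟩
  rcases eq_or_ne t 0 with rfl | ht
  · simp
  by_contra! hlt
  have hne : MvPolynomial.eval (u + t⁻¹ • w) P ≠ 0 := hball (by
    rw [dist_self_add_left, norm_smul, norm_inv, inv_mul_lt_iff₀ (norm_pos_iff.2 ht), mul_comm]
    exact hlt)
  have hscale : t • u + w = t • (u + t⁻¹ • w) := by rw [smul_add, smul_inv_smul₀ ht]
  rw [hscale, eval_smul_of_isHomogeneous hP] at h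
  exact mul_ne_zero (pow_ne_zero d ht) hne h

lemma isOpen_zeroFreeSet [Finite σ] (hP : P.IsHomogeneous d)
    (hu : MvPolynomial.eval u P ≠ 0) {F : Set ℂ} (hF : IsClosed F) :
    IsOpen (zeroFreeSet P u F) := by
  have := Fintype.ofFinite σ
  obtain ⟨ε, hε, hbound⟩ := exists_mul_norm_le_of_eval_smul_add_eq_zero hP hu
  rw [isOpen_iff_eventually]
  intro w hw
  have hcompact : IsCompact (F ∩ Metric.closedBall 0 ((‖w‖ + 1) / ε)) :=
    (isCompact_closedBall _ _).inter_left hF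
  have hnear : ∀ᶠ v in nhds w, ∀ t ∈ F ∩ Metric.closedBall 0 ((‖w‖ + 1) / ε),
      MvPolynomial.eval (t • u + v) P ≠ 0 :=
    hcompact.eventually_forall_of_forall_eventually fun t ht =>
      (continuous_eval_smul_add P u).continuousAt.eventually_ne (hw t ht.1)
  have hnorm : ∀ᶠ v in nhds w, ‖v‖ < ‖w‖ + 1 :=
    continuous_norm.continuousAt.eventually_lt_const (lt_add_one _)
  filter_upwards [hnear, hnorm] with v hv hvw t ht h0
  refine hv t ⟨ht, ?_⟩ h0
  rw [mem_closedBall_zero_iff, le_div_iff₀' hε]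
  exact (hbound t v h0).trans hvw.le

end ZeroFree

section RealRootedness

open Polynomial

variable {σ : Type*}

/-- The inclusion `ℝ^σ → ℂ^σ`, as a real linear map. -/
noncomputable def complexVec : (σ → ℝ) →ₗ[ℝ] (σ → ℂ) :=
  Complex.ofRealCLM.toLinearMap.compLeft σ

lemma eval_complexVec (p : MvPolynomial σ ℝ) (x : σ → ℝ) :
    MvPolynomial.eval (complexVec x) (p.map Complex.ofRealHom) = (MvPolynomial.eval x p : ℂ) := by
  rw [MvPolynomial.eval_map]
  exact (MvPolynomial.eval₂_comp Complex.ofRealHom x p).symm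

lemma eval_map_linePoly (p : MvPolynomial σ ℝ) (u w : σ → ℝ) (t : ℂ) :
    ((linePoly p u w).map Complex.ofRealHom).eval t =
      MvPolynomial.eval (t • complexVec u + complexVec w) (p.map Complex.ofRealHom) := by
  rw [map_linePoly, eval_linePoly]
  rfl

lemma splits_iff_forall_im_eq_zero {q : ℝ[X]} (hq : q ≠ 0) :
    q.Splits ↔ ∀ z : ℂ, (q.map Complex.ofRealHom).eval z = 0 → z.im = 0 := by
  refine ⟨fun h z hz => ?_, fun h => ?_⟩
  · obtain ⟨r, rfl⟩ := h.mem_range_of_isRoot hq hz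
    exact Complex.ofReal_im r
  · refine Splits.of_splits_map Complex.ofRealHom (IsAlgClosed.splits _) fun z hz => ?_
    exact ⟨z.re, Complex.ext rfl (h z (isRoot_of_mem_roots hz)).symm⟩

end RealRootedness

section Garding

variable {n d : ℕ} {p : MvPolynomial (Fin n) ℝ} {e a : Fin n → ℝ}

lemma hypCharPoly_eq_linePoly (p : MvPolynomial (Fin n) ℝ) (e x : Fin n → ℝ) :
    hypCharPoly p e x = linePoly p e (-x) := by
  simp only [hypCharPoly, linePoly, sub_eq_add_neg, Pi.neg_apply, map_neg]

lemma linePoly_ne_zero (hp : p.IsHomogeneous d) (he : MvPolynomial.eval e p ≠ 0)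
    (w : Fin n → ℝ) : linePoly p e w ≠ 0 := fun h =>
  he (by rw [← coeff_linePoly hp e w, h, Polynomial.coeff_zero])

lemma isHyperbolicPoly_iff : IsHyperbolicPoly p e d ↔
    p.IsHomogeneous d ∧ MvPolynomial.eval e p ≠ 0 ∧ ∀ (x : Fin n → ℝ) (t : ℂ),
      MvPolynomial.eval (t • complexVec e + complexVec x) (p.map Complex.ofRealHom) = 0 →
        t.im = 0 := by
  refine and_congr_right fun hp => and_congr_right fun he => (Equiv.neg _).forall_congr fun x => ?_
  have hdeg := natDegree_linePoly hp he (-x)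
  rw [hypCharPoly_eq_linePoly, Equiv.neg_apply]
  simp only [← eval_map_linePoly]
  rw [← splits_iff_forall_im_eq_zero (linePoly_ne_zero hp he _),
    Polynomial.splits_iff_card_roots, hdeg]

namespace IsHyperbolicPoly

lemma pos_of_eval_smul_sub_eq_zero (hp : IsHyperbolicPoly p e d) (ha : a ∈ hypConeOpen p e)
    {r : ℝ} (hr : MvPolynomial.eval (r • e - a) p = 0) : 0 < r := by
  refine ha r ?_
  rw [hypCharPoly_eq_linePoly, Polynomial.mem_roots (linePoly_ne_zero hp.1 hp.2.1 _),
    Polynomial.IsRoot, eval_linePoly, ← sub_eq_add_neg, hr]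

lemma eval_ne_zero_of_mem_hypConeOpen (hp : IsHyperbolicPoly p e d) (ha : a ∈ hypConeOpen p e) :
    MvPolynomial.eval a p ≠ 0 := fun h =>
  (hp.pos_of_eval_smul_sub_eq_zero ha (r := 0) (by
    rw [zero_smul, zero_sub, ← neg_one_smul ℝ a, eval_smul_of_isHomogeneous hp.1, h,
      mul_zero])).false

lemma eval_map_ne_zero_of_mem_hypConeOpen (hp : IsHyperbolicPoly p e d)
    (ha : a ∈ hypConeOpen p e) :
    MvPolynomial.eval (complexVec a) (p.map Complex.ofRealHom) ≠ 0 := by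
  rw [eval_complexVec]
  exact Complex.ofReal_ne_zero.2 (hp.eval_ne_zero_of_mem_hypConeOpen ha)

lemma eval_smul_add_I_smul_ne_zero (hp : IsHyperbolicPoly p e d) (ha : a ∈ hypConeOpen p e)
    {t : ℂ} (ht : 0 ≤ t.im) :
    MvPolynomial.eval (t • complexVec a + Complex.I • complexVec e)
      (p.map Complex.ofRealHom) ≠ 0 := by
  have hP := hp.1.map Complex.ofRealHom
  rcases eq_or_ne t 0 with rfl | ht0
  · rw [zero_smul, zero_add, eval_smul_of_isHomogeneous hP, eval_complexVec]
    exact mul_ne_zero (pow_ne_zero d Complex.I_ne_zero) (Complex.ofReal_ne_zero.2 hp.2.1)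
  intro h
  obtain ⟨τ, hτ⟩ : ∃ τ : ℂ, τ * t = -Complex.I := ⟨-Complex.I / t, div_mul_cancel₀ _ ht0⟩
  have hscale : t • complexVec a + Complex.I • complexVec e =
      (-t) • (τ • complexVec e + complexVec (-a)) := by
    rw [neg_eq_iff_eq_neg.1 hτ.symm, map_neg]
    module
  rw [hscale, eval_smul_of_isHomogeneous hP] at h
  have hroot := (mul_eq_zero.1 h).resolve_left (pow_ne_zero d (neg_ne_zero.2 ht0))
  obtain ⟨r, rfl⟩ : ∃ r : ℝ, (r : ℂ) = τ :=
    ⟨τ.re, Complex.ext rfl ((isHyperbolicPoly_iff.1 hp).2.2 _ _ hroot).symm⟩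
  have hr : 0 < r := hp.pos_of_eval_smul_sub_eq_zero ha (by
    rw [Complex.coe_smul, ← map_smul, ← map_add, eval_complexVec, ← sub_eq_add_neg] at hroot
    exact_mod_cast hroot)
  have him : r * t.im = -1 := by simpa using congrArg Complex.im hτ
  linarith [mul_nonneg hr.le ht]

/- Connectedness of the tube `{i β e + x | β > 0}`: on it the real parameters `t` never give a zero,
so there the open condition on the closed half-plane coincides with the closed condition on the
open half-plane. -/
lemma smul_add_mem_zeroFreeSet (hp : IsHyperbolicPoly p e d) (ha : a ∈ hypConeOpen p e)
    {β : ℝ} (hβ : 0 < β) (x : Fin n → ℝ) :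
    (β * Complex.I) • complexVec e + complexVec x ∈
      zeroFreeSet (p.map Complex.ofRealHom) (complexVec a) {t | 0 ≤ t.im} := by
  have hP := hp.1.map Complex.ofRealHom
  have hPa := hp.eval_map_ne_zero_of_mem_hypConeOpen ha
  have hconn := ((convex_Ioi (0 : ℝ)).prod (convex_univ (E := Fin n → ℝ))).isPreconnected.image
    (fun b => (b.1 * Complex.I) • complexVec e + complexVec b.2) (by
      have := (complexVec (σ := Fin n)).continuous_of_finiteDimensional
      fun_prop)
  refine hconn.subset_of_closure_inter_subset
    (isOpen_zeroFreeSet hP hPa (isClosed_le continuous_const Complex.continuous_im))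
    ⟨Complex.I • complexVec e, ⟨(1, 0), by simp, by simp⟩, fun t ht =>
      hp.eval_smul_add_I_smul_ne_zero ha ht⟩ ?_ ⟨(β, x), ⟨hβ, trivial⟩, rfl⟩
  rintro _ ⟨hcl, ⟨γ, y⟩, ⟨hγ : 0 < γ, -⟩, rfl⟩ t (ht : 0 ≤ t.im)
  rcases ht.eq_or_lt with ht | ht
  · obtain ⟨s, rfl⟩ : ∃ s : ℝ, (s : ℂ) = t := ⟨t.re, Complex.ext rfl ht⟩
    have hbase : (s : ℂ) • complexVec a + ((γ * Complex.I) • complexVec e + complexVec y) =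
        (γ * Complex.I) • complexVec e + complexVec (s • a + y) := by
      rw [add_left_comm, map_add, map_smul, Complex.coe_smul]
    intro h
    have him := (isHyperbolicPoly_iff.1 hp).2.2 _ _ (hbase ▸ h)
    exact hγ.ne' (by simpa using him)
  · exact closure_minimal (zeroFreeSet_anti fun t (ht : 0 < t.im) => ht.le)
      (isClosed_zeroFreeSet_upperHalfPlane hP hPa) hcl t ht

theorem of_mem_hypConeOpen (hp : IsHyperbolicPoly p e d) (ha : a ∈ hypConeOpen p e) :
    IsHyperbolicPoly p a d := by
  have hP := hp.1.map Complex.ofRealHom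
  have hPa := hp.eval_map_ne_zero_of_mem_hypConeOpen ha
  have hupper (x : Fin n → ℝ) : complexVec x ∈
      zeroFreeSet (p.map Complex.ofRealHom) (complexVec a) {t | 0 < t.im} := by
    have hlim : Filter.Tendsto (fun β : ℝ => (β * Complex.I) • complexVec e + complexVec x)
        (nhdsWithin 0 (Set.Ioi 0)) (nhds (complexVec x)) :=
      tendsto_nhdsWithin_of_tendsto_nhds (Continuous.tendsto' (by fun_prop) _ _ (by simp))
    refine (isClosed_zeroFreeSet_upperHalfPlane hP hPa).mem_of_tendsto hlim ?_
    filter_upwards [self_mem_nhdsWithin] with β hβ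
    exact zeroFreeSet_anti (fun t (ht : 0 < t.im) => ht.le) (hp.smul_add_mem_zeroFreeSet ha hβ x)
  refine isHyperbolicPoly_iff.2 ⟨hp.1, hp.eval_ne_zero_of_mem_hypConeOpen ha, fun x t h => ?_⟩
  rcases lt_trichotomy t.im 0 with ht | ht | ht
  · refine absurd ?_ (hupper (-x) (-t) (by simpa using ht))
    rw [map_neg, neg_smul, ← neg_add, ← neg_one_smul ℂ, eval_smul_of_isHomogeneous hP, h, mul_zero]
  · exact ht
  · exact absurd h (hupper x t ht)

end IsHyperbolicPoly

end Garding

section Laguerre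

open Polynomial

lemma laguerre_inequality {R : Type*} [CommRing R] [LinearOrder R] [IsStrictOrderedRing R]
    {q : R[X]} (hq : q.Splits) (t : R) :
    q.eval t * q.derivative.derivative.eval t ≤ q.derivative.eval t ^ 2 := by
  induction hq using Submonoid.closure_induction with
  | mem q hq => rcases hq with ⟨c, rfl⟩ | ⟨c, rfl⟩ <;> simp
  | one => simp
  | mul f g _ _ hf hg =>
    simp only [derivative_mul, derivative_add, eval_add, eval_mul]
    linear_combination g.eval t ^ 2 * hf + f.eval t ^ 2 * hg

end Laguerre

section Hessian

variable {n d : ℕ} {p : MvPolynomial (Fin n) ℝ} {a : Fin n → ℝ}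

lemma pderiv_comm {σ R : Type*} [CommRing R] (i j : σ) (q : MvPolynomial σ R) :
    (q.pderiv j).pderiv i = (q.pderiv i).pderiv j := by
  classical
  have h : ⁅(MvPolynomial.pderiv i : Derivation R _ (MvPolynomial σ R)),
      (MvPolynomial.pderiv j : Derivation R _ (MvPolynomial σ R))⁆ = 0 :=
    MvPolynomial.derivation_ext fun k => by
      rw [Derivation.commutator_apply, MvPolynomial.pderiv_X, MvPolynomial.pderiv_X,
        Pi.single_apply, Pi.single_apply]
      split_ifs <;> simp
  rw [← sub_eq_zero, ← Derivation.commutator_apply, h, Derivation.zero_apply]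

lemma isSymm_hessNegLog (p : MvPolynomial (Fin n) ℝ) (a : Fin n → ℝ) :
    (hessNegLog p a).IsSymm := by
  refine Matrix.IsSymm.ext fun i j => ?_
  simp only [hessNegLog, Matrix.of_apply]
  rw [pderiv_comm i j, mul_comm (MvPolynomial.eval a (MvPolynomial.pderiv i p))]

lemma eval_zero_derivative_linePoly (p : MvPolynomial (Fin n) ℝ) (v a : Fin n → ℝ) :
    (linePoly p v a).derivative.eval 0 = ∑ i, v i * MvPolynomial.eval a (p.pderiv i) := by
  simp [derivative_linePoly, Polynomial.eval_finsetSum, eval_linePoly]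

lemma eval_zero_derivative_derivative_linePoly (p : MvPolynomial (Fin n) ℝ) (v a : Fin n → ℝ) :
    (linePoly p v a).derivative.derivative.eval 0 =
      ∑ i, ∑ j, v i * v j * MvPolynomial.eval a ((p.pderiv j).pderiv i) := by
  rw [Finset.sum_comm]
  simp only [derivative_linePoly p, Polynomial.derivative_sum, Polynomial.derivative_C_mul,
    Polynomial.eval_finsetSum, Polynomial.eval_C_mul, eval_zero_derivative_linePoly, Finset.mul_sum]
  exact Finset.sum_congr rfl fun i _ => Finset.sum_congr rfl fun j _ => by ring

lemma localIP_self_eq (p : MvPolynomial (Fin n) ℝ) (a v : Fin n → ℝ) :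
    localIP p a v v =
      (linePoly p v a).derivative.eval 0 ^ 2 / MvPolynomial.eval a p ^ 2 -
        (linePoly p v a).derivative.derivative.eval 0 / MvPolynomial.eval a p := by
  rw [eval_zero_derivative_linePoly, eval_zero_derivative_derivative_linePoly, localIP, sq (∑ i, _),
    Finset.sum_mul_sum]
  simp only [Finset.sum_div, ← Finset.sum_sub_distrib]
  refine Finset.sum_congr rfl fun i _ => Finset.sum_congr rfl fun j _ => ?_
  simp only [hessNegLog, Matrix.of_apply]
  ring

lemma localIP_direction_self (hp : p.IsHomogeneous d) (ha : MvPolynomial.eval a p ≠ 0) :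
    localIP p a a a = d := by
  have hline : linePoly p a a =
      Polynomial.C (MvPolynomial.eval a p) * (Polynomial.X + 1) ^ d :=
    Polynomial.funext fun t => by
      have hscale : t • a + a = (t + 1) • a := by module
      rw [eval_linePoly, hscale, eval_smul_of_isHomogeneous hp]
      simp [mul_comm]
  have h1 : (linePoly p a a).derivative.eval 0 = MvPolynomial.eval a p * d := by
    simp [hline, Polynomial.derivative_pow]
  have h2 : (linePoly p a a).derivative.derivative.eval 0 =
      MvPolynomial.eval a p * (d * (d - 1)) := by
    rcases d with _ | d <;> simp [hline, Polynomial.derivative_pow]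
  rw [localIP_self_eq, h1, h2]
  field_simp
  ring

lemma toBilin'_hessNegLog (p : MvPolynomial (Fin n) ℝ) (a u v : Fin n → ℝ) :
    (hessNegLog p a).toBilin' u v = localIP p a u v :=
  Matrix.toBilin'_apply _ _ _

namespace IsHyperbolicPoly

lemma splits_linePoly (hp : IsHyperbolicPoly p a d) (v : Fin n → ℝ) :
    (linePoly p v a).Splits := by
  have hne : linePoly p v a ≠ 0 := fun h => hp.2.1 (by
    simpa [eval_linePoly] using congrArg (Polynomial.eval 0) h)
  refine (splits_iff_forall_im_eq_zero hne).2 fun t ht => ?_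
  rcases eq_or_ne t 0 with rfl | ht0
  · rfl
  have hscale : t • complexVec v + complexVec a = t • (t⁻¹ • complexVec a + complexVec v) := by
    rw [smul_add, smul_inv_smul₀ ht0, add_comm]
  rw [eval_map_linePoly, hscale, eval_smul_of_isHomogeneous (hp.1.map _)] at ht
  have hinv := (isHyperbolicPoly_iff.1 hp).2.2 v t⁻¹
    ((mul_eq_zero.1 ht).resolve_left (pow_ne_zero d ht0))
  simpa [ht0] using hinv

lemma localIP_self_nonneg (hp : IsHyperbolicPoly p a d) (v : Fin n → ℝ) :
    0 ≤ localIP p a v v := by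
  have hlag := laguerre_inequality (hp.splits_linePoly v) 0
  have heval : (linePoly p v a).eval 0 = MvPolynomial.eval a p := by simp [eval_linePoly]
  rw [heval] at hlag
  have hpa := hp.2.1
  calc
    0 ≤ ((linePoly p v a).derivative.eval 0 ^ 2 -
        MvPolynomial.eval a p * (linePoly p v a).derivative.derivative.eval 0) /
          MvPolynomial.eval a p ^ 2 := div_nonneg (sub_nonneg.2 hlag) (sq_nonneg _)
    _ = localIP p a v v := by rw [localIP_self_eq]; field_simp

lemma isPosSemidef_hessNegLog (hp : IsHyperbolicPoly p a d) :
    (hessNegLog p a).toBilin'.IsPosSemidef where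
  isSymm := Matrix.isSymm_toBilin'_iff_isSymm.2 (isSymm_hessNegLog p a)
  nonneg v := (hp.localIP_self_nonneg v).trans_eq (toBilin'_hessNegLog p a v v).symm

end IsHyperbolicPoly

end Hessian

section CircularCone

variable {V : Type*} [AddCommGroup V] [Module ℝ V] {B : LinearMap.BilinForm ℝ V} {a : V} {α β : ℝ}

/-- The circular cone `{x | B a x ≥ α ‖x‖_B}` around the axis `a`, where `‖x‖_B = √(B x x)`. -/
def circularCone (B : LinearMap.BilinForm ℝ V) (a : V) (α : ℝ) : Set V :=
  {x | α * √(B x x) ≤ B a x}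

/-- The form whose value at `x` is `B a a` times the squared `B`-length of the component of `x`
`B`-orthogonal to `a`. -/
noncomputable def perpForm (B : LinearMap.BilinForm ℝ V) (a : V) : LinearMap.BilinForm ℝ V :=
  B a a • B - LinearMap.BilinForm.linMulLin (B a) (B a)

lemma perpForm_apply (B : LinearMap.BilinForm ℝ V) (a x y : V) :
    perpForm B a x y = B a a * B x y - B a x * B a y := rfl

lemma isPosSemidef_perpForm (hB : B.IsPosSemidef) (a : V) : (perpForm B a).IsPosSemidef where
  eq x y := by
    simp only [perpForm_apply]
    rw [hB.isSymm.eq x y, mul_comm (B a x)]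
  nonneg x := by
    have := B.apply_sq_le_of_symm hB.nonneg (LinearMap.BilinForm.isSymm_iff.1 hB.isSymm) a x
    rw [perpForm_apply]
    linarith

lemma mul_sqrt_le_iff {c q b : ℝ} (hc : 0 ≤ c) : c * √q ≤ b ↔ 0 ≤ b ∧ c ^ 2 * q ≤ b ^ 2 := by
  rw [← Real.sqrt_le_iff, Real.sqrt_mul (sq_nonneg c), Real.sqrt_sq hc]

lemma mem_circularCone_iff (ha : 0 < B a a) (hα : 0 ≤ α) (hβ : 0 ≤ β)
    (hαβ : α ^ 2 + β ^ 2 = B a a) {x : V} :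
    x ∈ circularCone B a α ↔ 0 ≤ B a x ∧ α * √(perpForm B a x x) ≤ β * B a x := by
  rw [circularCone, Set.mem_ofPred, mul_sqrt_le_iff hα, mul_sqrt_le_iff hα, perpForm_apply]
  refine and_congr_right fun hx => ?_
  rw [and_iff_right (mul_nonneg hβ hx), ← mul_le_mul_iff_right₀ ha]
  exact ⟨fun h => by linear_combination h - B a x ^ 2 * hαβ,
    fun h => by linear_combination h + B a x ^ 2 * hαβ⟩

lemma abs_apply_le_sqrt_mul_sqrt (hB : B.IsPosSemidef) (x y : V) :
    |B x y| ≤ √(B x x) * √(B y y) := by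
  rw [← Real.sqrt_mul (hB.nonneg x)]
  exact Real.abs_le_sqrt
    (B.apply_sq_le_of_symm hB.nonneg (LinearMap.BilinForm.isSymm_iff.1 hB.isSymm) x y)

lemma mem_circularCone_of_apply_eq_zero (hB : B.IsPosSemidef) {x : V} (hx : B x = 0) (a : V)
    (α : ℝ) : x ∈ circularCone B a α := by
  have hax : B a x = 0 := by rw [← hB.isSymm.eq, hx, LinearMap.zero_apply]
  simp [circularCone, hx, hax]

lemma apply_nonneg_of_mem_circularCone (hB : B.IsPosSemidef) (ha : 0 < B a a) (hα : 0 ≤ α)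
    (hβ : 0 ≤ β) (hαβ : α ^ 2 + β ^ 2 = B a a) {s x : V} (hs : s ∈ circularCone B a β)
    (hx : x ∈ circularCone B a α) : 0 ≤ B s x := by
  obtain ⟨hx0, hx⟩ := (mem_circularCone_iff ha hα hβ hαβ).1 hx
  obtain ⟨hs0, hs⟩ := (mem_circularCone_iff ha hβ hα (by rwa [add_comm])).1 hs
  set D := √(perpForm B a x x)
  set E := √(perpForm B a s s)
  have hcs : -(E * D) ≤ B a a * B s x - B a s * B a x :=
    (abs_le.1 (abs_apply_le_sqrt_mul_sqrt (isPosSemidef_perpForm hB a) s x)).1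
  have hED : B a a * (E * D) ≤ B a a * (B a s * B a x) := calc
    B a a * (E * D) = (α * D) * (α * E) + (β * E) * (β * D) := by rw [← hαβ]; ring
    _ ≤ (β * B a x) * (α * E) + (α * B a s) * (β * D) := by gcongr
    _ = α * B a x * (β * E) + β * B a s * (α * D) := by ring
    _ ≤ α * B a x * (α * B a s) + β * B a s * (β * B a x) := by gcongr
    _ = B a a * (B a s * B a x) := by rw [← hαβ]; ring
  refine nonneg_of_mul_nonneg_right ?_ ha
  linarith [le_of_mul_le_mul_left hED ha]

lemma mem_circularCone_of_forall_apply_nonneg (hB : B.IsPosSemidef) (ha : 0 < B a a) (hα : 0 ≤ α)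
    (hβ : 0 ≤ β) (hαβ : α ^ 2 + β ^ 2 = B a a) {s : V}
    (hs : ∀ x ∈ circularCone B a α, 0 ≤ B s x) : s ∈ circularCone B a β := by
  have hmem {x : V} := mem_circularCone_iff (x := x) ha hα hβ hαβ
  have hsa : B s a = B a s := hB.isSymm.eq s a
  have hs0 : 0 ≤ B a s := hsa ▸ hs a (hmem.2 ⟨ha.le, by
    simpa [perpForm_apply] using mul_nonneg hβ ha.le⟩)
  refine (mem_circularCone_iff ha hβ hα (by rwa [add_comm])).2 ⟨hs0, ?_⟩
  have hE : √(perpForm B a s s) ^ 2 = B a a * B s s - B a s * B a s :=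
    Real.sq_sqrt ((isPosSemidef_perpForm hB a).nonneg s)
  set E := √(perpForm B a s s)
  -- `x` is the boundary point of the cone, in the plane of `a` and `s`, opposite to `s`.
  set x := (α * E + β * B a s) • a - (β * B a a) • s
  have hax : B a x = B a a * (α * E) := by
    simp only [x, map_sub, map_smul, smul_eq_mul]
    ring
  have hperp : √(perpForm B a x x) = β * B a a * E := by
    rw [← Real.sqrt_sq (by positivity : 0 ≤ β * B a a * E), mul_pow, hE]
    congr 1
    simp only [perpForm_apply, hax]
    simp only [x, map_sub, map_smul, LinearMap.sub_apply, LinearMap.smul_apply, smul_eq_mul, hsa]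
    ring
  have hsx : 0 ≤ E * (α * B a s - β * E) := calc
    0 ≤ B s x := hs x (hmem.2 ⟨by rw [hax]; positivity, by rw [hax, hperp]; linarith⟩)
    _ = E * (α * B a s - β * E) := by
      simp only [x, map_sub, map_smul, smul_eq_mul, hsa]
      linear_combination β * hE
  have hE_nonneg : 0 ≤ E := Real.sqrt_nonneg _
  rcases hE_nonneg.eq_or_lt with hE0 | hEpos
  · rw [← hE0, mul_zero]
    exact mul_nonneg hα hs0
  · exact sub_nonneg.1 (nonneg_of_mul_nonneg_right hsx hEpos)

theorem dual_circularCone [FiniteDimensional ℝ V] (hB : B.IsPosSemidef) (ha : 0 < B a a)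
    (hα : 0 ≤ α) (hβ : 0 ≤ β) (hαβ : α ^ 2 + β ^ 2 = B a a) :
    {f : Module.Dual ℝ V | ∀ x ∈ circularCone B a α, 0 ≤ f x} = B '' circularCone B a β := by
  ext f
  constructor
  · intro hf
    have hker : f ∈ (LinearMap.ker B).dualAnnihilator := by
      refine (Submodule.mem_dualAnnihilator f).2 fun x hx => ?_
      have hneg : B (-x) = 0 := by rw [map_neg, LinearMap.mem_ker.1 hx, neg_zero]
      refine le_antisymm ?_ (hf x (mem_circularCone_of_apply_eq_zero hB hx a α))
      simpa using hf (-x) (mem_circularCone_of_apply_eq_zero hB hneg a α)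
    have hflip : LinearMap.flip B = B := LinearMap.ext₂ fun x y => hB.isSymm.eq y x
    rw [LinearMap.dualAnnihilator_ker_eq_range_flip, hflip] at hker
    obtain ⟨s, rfl⟩ := hker
    exact ⟨s, mem_circularCone_of_forall_apply_nonneg hB ha hα hβ hαβ hf, rfl⟩
  · rintro ⟨s, hs, rfl⟩ x hx
    exact apply_nonneg_of_mem_circularCone hB ha hα hβ hαβ hs hx

end CircularCone

section QuadCone

lemma quadCone_eq_circularCone {n : ℕ} (p : MvPolynomial (Fin n) ℝ) (a : Fin n → ℝ) (α : ℝ) :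
    quadCone p a α = circularCone (hessNegLog p a).toBilin' a α := by
  simp only [quadCone, circularCone, localNorm, toBilin'_hessNegLog]

lemma dotProductEquiv_mulVec {R ι : Type*} [CommRing R] [Fintype ι] [DecidableEq ι]
    {M : Matrix ι ι R} (hM : M.IsSymm) (s : ι → R) :
    dotProductEquiv R ι (M.mulVec s) = M.toBilin' s := by
  refine LinearMap.ext fun x => ?_
  rw [dotProductEquiv_apply_apply, Matrix.toBilin'_apply', Matrix.dotProduct_mulVec,
    ← Matrix.mulVec_transpose, hM.eq]

end QuadCone

theorem stmt9_general {n d : ℕ} (hd : 1 ≤ d) (p : MvPolynomial (Fin n) ℝ) (e : Fin n → ℝ)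
    (hp : IsHyperbolicPoly p e d) (α : ℝ) (hα : 0 ≤ α) (hα' : α ≤ Real.sqrt d) :
    ∀ e' ∈ hypConeOpen p e,
      {y : Fin n → ℝ | ∀ x ∈ quadCone p e' α, 0 ≤ ∑ i, y i * x i} =
        (fun s => (hessNegLog p e').mulVec s) '' quadCone p e' (Real.sqrt ((d : ℝ) - α ^ 2)) := by
  intro a ha
  have hpa : IsHyperbolicPoly p a d := hp.of_mem_hypConeOpen ha
  have haa : (hessNegLog p a).toBilin' a a = d := by
    rw [toBilin'_hessNegLog, localIP_direction_self hpa.1 hpa.2.1]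
  have hαβ : α ^ 2 + √((d : ℝ) - α ^ 2) ^ 2 = (hessNegLog p a).toBilin' a a := by
    rw [haa, Real.sq_sqrt (sub_nonneg.2 ((Real.le_sqrt hα d.cast_nonneg).1 hα')), add_sub_cancel]
  have hdual := dual_circularCone hpa.isPosSemidef_hessNegLog
    (haa ▸ Nat.cast_pos.2 hd) hα (Real.sqrt_nonneg _) hαβ
  ext y
  rw [quadCone_eq_circularCone, quadCone_eq_circularCone]
  refine (Set.ext_iff.1 hdual (dotProductEquiv ℝ (Fin n) y)).trans ?_
  simp only [Set.mem_image, ← dotProductEquiv_mulVec (isSymm_hessNegLog p a),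
    EmbeddingLike.apply_eq_iff_eq]

/-- Proposition 8.10 in RS14.
For `0 < α < √d` and `e' ∈ Λ₊₊`, the dual cone of `K_{e'}(α)` with respect to the standard
inner product is `{H(e') s : s ∈ K_{e'}(√(d-α²))}`. -/
theorem stmt9 {n d : ℕ} (hd : 1 ≤ d) (p : MvPolynomial (Fin n) ℝ) (e : Fin n → ℝ)
    (hp : IsHyperbolicPoly p e d) (hpe : 0 < MvPolynomial.eval e p)
    (hreg : IsRegularCone p e)
    (α : ℝ) (hα : 0 < α) (hα' : α < Real.sqrt d) :
    ∀ e' ∈ hypConeOpen p e,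
      {y : Fin n → ℝ | ∀ x ∈ quadCone p e' α, 0 ≤ ∑ i, y i * x i} =
        (fun s => (hessNegLog p e').mulVec s) '' quadCone p e' (Real.sqrt ((d : ℝ) - α ^ 2)) := by
  exact stmt9_general hd p e hp α hα.le hα'.le
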